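/- arXiv:1507.01813 — 3 statements merged into one kernel-verified Lean document; each statement's English description precedes it below -/
import Mathlib

section
/- Let n ∈ ℤ³ with n ≠ 0 and let ω ∈ ℂ³ with Im(n·ω) ≠ 0. Then the following are equivalent: (i) there exist φ̂ ∈ ℂ and a measurable f̂ : ℝ³ → ℂ, not almost everywhere zero, with (1+|v|²)·f̂ integrable, such that (n·(v − ω))·f̂(v) = (n·∇μ(v))·φ̂ for almost every v ∈ ℝ³ and φ̂ = −(1/|n|²)·Σ_{j,ℓ} n_j n_ℓ ∫_{ℝ³} v_j v_ℓ f̂(v) dv; (ii) the Penrose instability relation (1/|n|²)·Σ_{j,ℓ} n_j n_ℓ ∫_{ℝ³} v_j v_ℓ (n·∇μ(v)) / (n·(v − ω)) dv = −1 holds. In either case λ := −i n·ω is an eigenvalue of the linearized kinetic incompressible Euler operator. -/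
/-!
The mode equation is an eigenvalue problem for a multiplication operator perturbed by one of rank
one. Since `n` is real, `|n·(v - ω)| ≥ |Im (n·ω)| > 0`, so the equation can be divided: every
solution is `f̂ = φ̂ • (n·∇μ) / (n·(v - ω))`. As `φ̂` depends linearly on `f̂`, a nonzero `φ̂`
cancels from its defining relation, and what remains is the Penrose relation. Conversely the
Penrose relation says that this profile with `φ̂ = 1` is a solution; it has a finite second moment
because the denominator is bounded below.
-/

open MeasureTheory

noncomputable section

abbrev E3 : Type := EuclideanSpace ℝ (Fin 3)

/-- Partial derivative in the `i`-th coordinate for functions on `ℝ³`. -/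
noncomputable def pdE (i : Fin 3) (g : E3 → ℝ) : E3 → ℝ :=
  fun v => fderiv ℝ g v (EuclideanSpace.single i 1)

section RankOne

variable {α : Type*} [MeasurableSpace α] {m : Measure α}

lemma ae_eq_smul_div_of_mul_ae_eq {𝕜 : Type*} [Field 𝕜] {D g f : α → 𝕜} {φ : 𝕜}
    (hD : ∀ a, D a ≠ 0) (h : ∀ᵐ a ∂m, D a * f a = g a * φ) : f =ᵐ[m] φ • (g / D) := by
  filter_upwards [h] with a ha
  rw [Pi.smul_apply, Pi.div_apply, smul_eq_mul, ← mul_div_assoc, eq_div_iff (hD a), mul_comm φ,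
    ← ha, mul_comm]

theorem exists_rankOne_mode_iff {𝕜 : Type*} [NormedField 𝕜] [MeasurableSpace 𝕜]
    {D g w : α → 𝕜} {L : (α → 𝕜) → 𝕜} (hD : ∀ a, D a ≠ 0) (hmeas : Measurable (g / D))
    (hint : Integrable (fun a => w a * (g / D) a) m)
    (hL_congr : ∀ ⦃f₁ f₂ : α → 𝕜⦄, f₁ =ᵐ[m] f₂ → L f₁ = L f₂)
    (hL_smul : ∀ (c : 𝕜) (f : α → 𝕜), L (c • f) = c * L f) :
    (∃ (φ : 𝕜) (f : α → 𝕜), Measurable f ∧ ¬ f =ᵐ[m] 0 ∧ Integrable (fun a => w a * f a) m ∧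
        (∀ᵐ a ∂m, D a * f a = g a * φ) ∧ φ = -L f)
      ↔ L (g / D) = -1 := by
  constructor
  · rintro ⟨φ, f, -, hf_ne, -, hmode, hφ⟩
    have hf : f =ᵐ[m] φ • (g / D) := ae_eq_smul_div_of_mul_ae_eq hD hmode
    have hφ_ne : φ ≠ 0 := by
      rintro rfl
      exact hf_ne (by rwa [zero_smul] at hf)
    rw [hL_congr hf, hL_smul] at hφ
    exact mul_left_cancel₀ hφ_ne (by linear_combination hφ)
  · intro hL
    refine ⟨1, g / D, hmeas, fun h_zero => ?_, hint, .of_forall fun a => ?_, by rw [hL, neg_neg]⟩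
    · have hL_zero : L 0 = 0 := by simpa only [zero_smul, zero_mul] using hL_smul 0 0
      rw [hL_congr h_zero, hL_zero] at hL
      exact neg_ne_zero.2 one_ne_zero hL.symm
    · rw [Pi.div_apply, mul_div_cancel₀ _ (hD a), mul_one]

end RankOne

section WeightedGradient

open scoped Gradient

lemma measurable_gradient {F : Type*} [NormedAddCommGroup F] [InnerProductSpace ℝ F]
    [CompleteSpace F] [MeasurableSpace F] [BorelSpace F] (μ : F → ℝ) : Measurable (∇ μ) :=
  (InnerProductSpace.toDual ℝ F).symm.continuous.measurable.comp (measurable_fderiv ℝ μ)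

lemma gradient_apply_eq_pdE (μ : E3 → ℝ) (v : E3) (i : Fin 3) : ∇ μ v i = pdE i μ v := by
  rw [pdE, ← inner_gradient_left, EuclideanSpace.inner_single_right, one_mul, conj_trivial]

lemma norm_gradient_eq_sqrt_sum_pdE (μ : E3 → ℝ) (v : E3) :
    ‖∇ μ v‖ = Real.sqrt (∑ i, (pdE i μ v) ^ 2) := by
  simp only [EuclideanSpace.norm_eq, gradient_apply_eq_pdE, Real.norm_eq_abs, sq_abs]

lemma integrable_one_add_sq_mul_norm {E F : Type*} [NormedAddCommGroup E] [MeasurableSpace E]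
    [OpensMeasurableSpace E] [NormedAddCommGroup F] {m : Measure E} {u : E → F}
    (hu : AEStronglyMeasurable u m) (h : Integrable (fun v => (1 + ‖v‖) ^ 3 * ‖u v‖) m) :
    Integrable (fun v => (1 + ‖v‖ ^ 2) * ‖u v‖) m := by
  refine h.mono' (.mul (by fun_prop) hu.norm) (.of_forall fun v => ?_)
  have hweight : 1 + ‖v‖ ^ 2 ≤ (1 + ‖v‖) ^ 3 := by
    nlinarith [norm_nonneg v, pow_nonneg (norm_nonneg v) 2, pow_nonneg (norm_nonneg v) 3]
  rw [Real.norm_of_nonneg (by positivity)]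
  gcongr

lemma integrable_one_add_sq_mul_norm_gradient {μ : E3 → ℝ} {m : Measure E3}
    (h : Integrable (fun v => (1 + ‖v‖) ^ 3 * Real.sqrt (∑ i, (pdE i μ v) ^ 2)) m) :
    Integrable (fun v => (1 + ‖v‖ ^ 2) * ‖∇ μ v‖) m :=
  integrable_one_add_sq_mul_norm (measurable_gradient μ).aestronglyMeasurable
    (by simpa only [norm_gradient_eq_sqrt_sum_pdE] using h)

lemma integrable_mul_sum_mul {α ι : Type*} [MeasurableSpace α] [Fintype ι] {m : Measure α}
    {w : α → ℝ} {u : α → EuclideanSpace ℝ ι} (hw : AEStronglyMeasurable w m)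
    (hu : AEStronglyMeasurable u m) (h : Integrable (fun a => w a * ‖u a‖) m) (n : ι → ℝ) :
    Integrable (fun a => (w a : ℂ) * ∑ i, (n i : ℂ) * (u a i : ℂ)) m := by
  have hwu : Integrable (fun a => w a • u a) m :=
    (integrable_norm_iff (hw.smul hu)).1 (by simpa [norm_smul] using h.norm)
  refine (hwu.const_inner (𝕜 := ℝ) (WithLp.toLp 2 n)).ofReal.congr (.of_forall fun a => ?_)
  simp [inner_smul_right, PiLp.inner_apply, mul_comm (n _ : ℂ)]

end WeightedGradient

section Penrose

variable {ι : Type*} [Fintype ι]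

/-- The resonance factor `n·(v - ω)`. For the mode `exp(i n·y + λ t)` with `λ = -i n·ω`, the free
transport operator `∂ₜ + v·∇_y` acts as multiplication by `i` times this factor. -/
def resonance (n : ι → ℝ) (ω : ι → ℂ) (v : EuclideanSpace ℝ ι) : ℂ :=
  ∑ i, (n i : ℂ) * ((v i : ℂ) - ω i)

/-- The longitudinal second moment `|n|⁻² (n ⊗ n) : ∫ v ⊗ v f(v) dv`, whose negative is the Fourier
coefficient at `n` of the potential generated by `f`. -/
def longitudinalMoment (n : ι → ℝ) (f : EuclideanSpace ℝ ι → ℂ) : ℂ :=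
  ((1 : ℂ) / ((∑ i, (n i) ^ 2 : ℝ) : ℂ)) *
    ∑ j, ∑ l, (n j : ℂ) * (n l : ℂ) * ∫ v : EuclideanSpace ℝ ι, ((v j : ℂ) * (v l : ℂ)) * f v

lemma longitudinalMoment_congr_ae (n : ι → ℝ) {f₁ f₂ : EuclideanSpace ℝ ι → ℂ}
    (h : f₁ =ᵐ[volume] f₂) : longitudinalMoment n f₁ = longitudinalMoment n f₂ := by
  have hint (j l : ι) : ∫ v : EuclideanSpace ℝ ι, ((v j : ℂ) * (v l : ℂ)) * f₁ v
      = ∫ v : EuclideanSpace ℝ ι, ((v j : ℂ) * (v l : ℂ)) * f₂ v :=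
    integral_congr_ae (h.mono fun v hv => by simp only [hv])
  simp only [longitudinalMoment, hint]

lemma longitudinalMoment_smul (n : ι → ℝ) (c : ℂ) (f : EuclideanSpace ℝ ι → ℂ) :
    longitudinalMoment n (c • f) = c * longitudinalMoment n f := by
  simp only [longitudinalMoment, Pi.smul_apply, smul_eq_mul, mul_left_comm _ c, integral_const_mul,
    ← Finset.mul_sum]

lemma continuous_resonance (n : ι → ℝ) (ω : ι → ℂ) : Continuous (resonance n ω) := by
  unfold resonance
  fun_prop

lemma abs_im_le_norm_resonance (n : ι → ℝ) (ω : ι → ℂ) (v : EuclideanSpace ℝ ι) :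
    |(∑ i, (n i : ℂ) * ω i).im| ≤ ‖resonance n ω v‖ := by
  have him : (resonance n ω v).im = -(∑ i, (n i : ℂ) * ω i).im := by
    simp [resonance, mul_sub, Finset.sum_sub_distrib]
  rw [← abs_neg, ← him]
  exact Complex.abs_im_le_norm _

lemma resonance_ne_zero {n : ι → ℝ} {ω : ι → ℂ} (hω : (∑ i, (n i : ℂ) * ω i).im ≠ 0)
    (v : EuclideanSpace ℝ ι) : resonance n ω v ≠ 0 :=
  norm_pos_iff.1 ((abs_pos.2 hω).trans_le (abs_im_le_norm_resonance n ω v))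

lemma integrable_div_resonance {m : Measure (EuclideanSpace ℝ ι)} {n : ι → ℝ} {ω : ι → ℂ}
    (hω : (∑ i, (n i : ℂ) * ω i).im ≠ 0) {g : EuclideanSpace ℝ ι → ℂ} (hg : Integrable g m) :
    Integrable (fun v => g v / resonance n ω v) m := by
  simp only [div_eq_mul_inv]
  refine hg.mul_bdd (c := |(∑ i, (n i : ℂ) * ω i).im|⁻¹)
    ((continuous_resonance n ω).inv₀ (resonance_ne_zero hω)).aestronglyMeasurable
    (.of_forall fun v => ?_)
  rw [norm_inv]
  exact inv_anti₀ (abs_pos.2 hω) (abs_im_le_norm_resonance n ω v)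

theorem penrose_instability_characterization_general {μ : EuclideanSpace ℝ ι → ℝ}
    {μ' : EuclideanSpace ℝ ι → EuclideanSpace ℝ ι} (hμ : ∀ v, HasGradientAt μ (μ' v) v)
    (hμint : Integrable fun v => (1 + ‖v‖ ^ 2) * ‖μ' v‖) {n : ι → ℝ} {ω : ι → ℂ}
    (hω : (∑ i, (n i : ℂ) * ω i).im ≠ 0) :
    (∃ (φ : ℂ) (f : EuclideanSpace ℝ ι → ℂ), Measurable f ∧ ¬ f =ᵐ[volume] 0 ∧
        Integrable (fun v => ((1 + ‖v‖ ^ 2 : ℝ) : ℂ) * f v) ∧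
        (∀ᵐ v, resonance n ω v * f v = (∑ i, (n i : ℂ) * (μ' v i : ℂ)) * φ) ∧
        φ = -longitudinalMoment n f)
      ↔ longitudinalMoment n (fun v => (∑ i, (n i : ℂ) * (μ' v i : ℂ)) / resonance n ω v)
        = -1 := by
  have hμ'_meas : Measurable μ' := gradient_eq hμ ▸ measurable_gradient μ
  have hresonance_meas : Measurable (resonance n ω) := (continuous_resonance n ω).measurable
  refine exists_rankOne_mode_iff (resonance_ne_zero hω) (.div (by fun_prop) hresonance_meas) ?_
    (fun _ _ h => longitudinalMoment_congr_ae n h) (longitudinalMoment_smul n)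
  have hsource := integrable_mul_sum_mul (by fun_prop) hμ'_meas.aestronglyMeasurable hμint n
  simpa only [Pi.div_apply, mul_div_assoc] using integrable_div_resonance hω hsource

end Penrose

/-- Characterization of growing modes of the linearized kinetic incompressible Euler operator:
for `n ∈ ℤ³ \ {0}` and `ω ∈ ℂ³` with `Im(n·ω) ≠ 0`, the existence of a nontrivial pair
`(f̂, φ̂)` with `(n·(v - ω))·f̂(v) = (n·∇μ(v))·φ̂` a.e. and
`φ̂ = -(1/|n|²)·Σ_{j,ℓ} n_j n_ℓ ∫ v_j v_ℓ f̂ dv` is equivalent to the Penrose instability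
relation `(1/|n|²)·Σ_{j,ℓ} n_j n_ℓ ∫ v_j v_ℓ (n·∇μ(v))/(n·(v-ω)) dv = -1`
(in either case `λ := -i n·ω` is an eigenvalue of the linearized operator). -/
theorem penrose_instability_characterization (μ : E3 → ℝ) (hμ : ContDiff ℝ 1 μ)
    (hμint : Integrable (fun v : E3 => (1 + ‖v‖) ^ 3 * Real.sqrt (∑ i, (pdE i μ v) ^ 2)))
    (n : Fin 3 → ℤ) (hn : n ≠ 0) (ω : Fin 3 → ℂ)
    (himω : (∑ i, (n i : ℂ) * ω i).im ≠ 0) :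
    (∃ (φ : ℂ) (f : E3 → ℂ), Measurable f ∧ ¬ (f =ᵐ[volume] 0) ∧
        Integrable (fun v : E3 => ((1 + ‖v‖ ^ 2 : ℝ) : ℂ) * f v) ∧
        (∀ᵐ v : E3,
          (∑ i, (n i : ℂ) * ((v i : ℂ) - ω i)) * f v
            = (∑ i, (n i : ℂ) * (pdE i μ v : ℂ)) * φ) ∧
        φ = -((1 : ℂ) / ((∑ i, ((n i : ℝ)) ^ 2 : ℝ) : ℂ)) *
              ∑ j, ∑ l, (n j : ℂ) * (n l : ℂ) *
                ∫ v : E3, ((v j : ℂ) * (v l : ℂ)) * f v)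
      ↔ ((1 : ℂ) / ((∑ i, ((n i : ℝ)) ^ 2 : ℝ) : ℂ)) *
          (∑ j, ∑ l, (n j : ℂ) * (n l : ℂ) *
            ∫ v : E3, ((v j : ℂ) * (v l : ℂ)) *
              (∑ i, (n i : ℂ) * (pdE i μ v : ℂ))
                / (∑ i, (n i : ℂ) * ((v i : ℂ) - ω i)))
        = -1 := by
  simpa only [longitudinalMoment, resonance, gradient_apply_eq_pdE, Complex.ofReal_intCast,
    neg_mul, mul_div_assoc] using penrose_instability_characterization_general
      (fun v => (hμ.differentiable one_ne_zero v).hasGradientAt)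
      (integrable_one_add_sq_mul_norm_gradient hμint) (n := fun i => (n i : ℝ))
      (by simpa only [Complex.ofReal_intCast] using himω)

end
end

section
/- Let λ ∈ ℂ with Re λ ≠ 0 and suppose D(λ) := 1 − i ∫_{ℝ³} v₁² ∂_{v₁}μ(v) / (λ + i v₁) dv ≠ 0. Let h : ℝ³ → ℂ be measurable with (1+|v|²)·h integrable. Then there is a unique measurable f : ℝ³ → ℂ with (1+|v|²)·f integrable solving the resolvent equation f(v) + i ∂_{v₁}μ(v)·φ / (λ + i v₁) = h(v)/(λ + i v₁) for almost every v, where φ := −∫_{ℝ³} v₁² f(v) dv; moreover its multiplier satisfies φ = −(1/D(λ)) ∫_{ℝ³} v₁² h(v) / (λ + i v₁) dv. -/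
open MeasureTheory

noncomputable section

/-!
With `φ = -∫ v₁² f` the equation reads `f + (∫ v₁² f) a = b`, where `a = -i ∂_{v₁}μ / (λ + i v₁)`
and `b = h / (λ + i v₁)`: a rank-one perturbation of the identity. Integrating against `v₁²` gives
the scalar equation `D(λ) ∫ v₁² f = ∫ v₁² b`, so `D(λ) ≠ 0` determines `∫ v₁² f`, and then `f`.
Since `|λ + i v₁| ≥ |Re λ|`, dividing by `λ + i v₁` preserves integrability against `1 + |v|²`.
-/

section RankOnePerturbation

variable {α 𝕜 : Type*} [MeasurableSpace α] [RCLike 𝕜] {ν : Measure α} {q a b f : α → 𝕜}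

lemma integral_mul_eq_sub_of_ae_eq_sub (hqa : Integrable (fun v => q v * a v) ν)
    (hqb : Integrable (fun v => q v * b v) ν) {c : 𝕜} (hf : f =ᵐ[ν] fun v => b v - c * a v) :
    ∫ v, q v * f v ∂ν = (∫ v, q v * b v ∂ν) - c * ∫ v, q v * a v ∂ν := by
  rw [← integral_const_mul, ← integral_sub hqb (hqa.const_mul c)]
  refine integral_congr_ae ?_
  filter_upwards [hf] with v hv
  rw [hv]
  ring

lemma integral_mul_eq_div_of_ae_eq_sub (hqa : Integrable (fun v => q v * a v) ν)
    (hqb : Integrable (fun v => q v * b v) ν) (hD : 1 + ∫ v, q v * a v ∂ν ≠ 0)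
    (hf : f =ᵐ[ν] fun v => b v - (∫ w, q w * b w ∂ν) / (1 + ∫ w, q w * a w ∂ν) * a v) :
    ∫ v, q v * f v ∂ν = (∫ v, q v * b v ∂ν) / (1 + ∫ v, q v * a v ∂ν) := by
  rw [integral_mul_eq_sub_of_ae_eq_sub hqa hqb hf]
  field_simp
  ring

theorem add_integral_mul_ae_eq_iff (hqa : Integrable (fun v => q v * a v) ν)
    (hqb : Integrable (fun v => q v * b v) ν) (hD : 1 + ∫ v, q v * a v ∂ν ≠ 0) :
    (∀ᵐ v ∂ν, f v + (∫ w, q w * f w ∂ν) * a v = b v) ↔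
      f =ᵐ[ν] fun v => b v - (∫ w, q w * b w ∂ν) / (1 + ∫ w, q w * a w ∂ν) * a v := by
  constructor
  · intro hf
    have hsub : f =ᵐ[ν] fun v => b v - (∫ w, q w * f w ∂ν) * a v :=
      hf.mono fun v hv => eq_sub_of_add_eq hv
    have hmoment : ∫ w, q w * f w ∂ν = (∫ w, q w * b w ∂ν) / (1 + ∫ w, q w * a w ∂ν) := by
      rw [eq_div_iff hD]
      linear_combination integral_mul_eq_sub_of_ae_eq_sub hqa hqb hsub
    rwa [hmoment] at hsub
  · intro hf
    rw [integral_mul_eq_div_of_ae_eq_sub hqa hqb hD hf]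
    exact hf.mono fun v hv => add_eq_of_eq_sub hv

end RankOnePerturbation

section Integrability

variable {α : Type*} [MeasurableSpace α] {ν : Measure α}

lemma integrable_mul_of_norm_le_mul_norm {𝕜 : Type*} [RCLike 𝕜] {q w k : α → 𝕜}
    (hq : AEStronglyMeasurable q ν) (hw : AEStronglyMeasurable w ν) (hw0 : ∀ v, w v ≠ 0) {C : ℝ}
    (hqw : ∀ v, ‖q v‖ ≤ C * ‖w v‖) (hk : Integrable (fun v => w v * k v) ν) :
    Integrable (fun v => q v * k v) ν := by
  have hbound (v : α) : ‖q v / w v‖ ≤ C := by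
    rw [norm_div, div_le_iff₀ (norm_pos_iff.mpr (hw0 v))]
    exact hqw v
  have hcancel (v : α) : q v / w v * (w v * k v) = q v * k v := by
    rw [← mul_assoc, div_mul_cancel₀ _ (hw0 v)]
  exact (hk.bdd_mul (hq.div₀ hw) (.of_forall hbound)).congr (.of_forall hcancel)

lemma norm_inv_add_I_mul_ofReal_le {l : ℂ} (hl : l.re ≠ 0) (x : ℝ) :
    ‖(l + Complex.I * x)⁻¹‖ ≤ |l.re|⁻¹ := by
  rw [norm_inv]
  gcongr
  simpa using Complex.abs_re_le_norm (l + Complex.I * x)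

lemma integrable_div_add_I_mul_ofReal {l : ℂ} (hl : l.re ≠ 0) {x : α → ℝ} (hx : AEMeasurable x ν)
    {k : α → ℂ} (hk : Integrable k ν) : Integrable (fun v => k v / (l + Complex.I * x v)) ν := by
  simp only [div_eq_mul_inv]
  exact hk.mul_bdd (AEMeasurable.aestronglyMeasurable (by fun_prop))
    (.of_forall fun v => norm_inv_add_I_mul_ofReal_le hl (x v))

end Integrability

section PolynomialWeight

variable {E : Type*} [SeminormedAddCommGroup E]

lemma one_add_sq_norm_ofReal_ne_zero (v : E) : ((1 + ‖v‖ ^ 2 : ℝ) : ℂ) ≠ 0 :=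
  Complex.ofReal_ne_zero.mpr (by positivity)

variable [MeasurableSpace E] [OpensMeasurableSpace E] {ν : Measure E} {k : E → ℂ}

lemma aestronglyMeasurable_of_integrable_weight_mul
    (hk : Integrable (fun v => ((1 + ‖v‖ ^ 2 : ℝ) : ℂ) * k v) ν) : AEStronglyMeasurable k ν := by
  have hone : Integrable (fun v => 1 * k v) ν :=
    integrable_mul_of_norm_le_mul_norm (C := 1) aestronglyMeasurable_const
      (Measurable.aestronglyMeasurable (by fun_prop)) one_add_sq_norm_ofReal_ne_zero
      (fun v => by
        rw [norm_one, one_mul, Complex.norm_of_nonneg (by positivity)]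
        exact le_add_of_nonneg_right (sq_nonneg _)) hk
  simpa only [one_mul] using hone.aestronglyMeasurable

end PolynomialWeight

section Resolvent

variable {E : Type*} [SeminormedAddCommGroup E] [NormedSpace ℝ E] [MeasurableSpace E]

/-- The multiplier `φ(f) = -∫ ℓ(v)² f(v) dν`, with `ℓ` in the role of the coordinate `v₁`. -/
def multiplier (ν : Measure E) (ℓ : StrongDual ℝ E) (f : E → ℂ) : ℂ :=
  -∫ w, ((ℓ w ^ 2 : ℝ) : ℂ) * f w ∂ν

/-- The function `D(λ) = 1 - i ∫ ℓ² p / (λ + i ℓ) dν`, whose nonvanishing gives unique solvability;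
`p` takes the place of `∂_{v₁}μ`. -/
def dispersion (ν : Measure E) (ℓ : StrongDual ℝ E) (p : E → ℂ) (l : ℂ) : ℂ :=
  1 - Complex.I * ∫ v, ((ℓ v ^ 2 : ℝ) : ℂ) * p v / (l + Complex.I * (ℓ v : ℂ)) ∂ν

/-- `f` solves the resolvent equation `(λ - 𝓛) f = h` almost everywhere, where
`𝓛 f = -i ℓ f - i p φ(f)`; both sides are recorded after division by `λ + i ℓ`. -/
def IsResolventSolution (ν : Measure E) (ℓ : StrongDual ℝ E) (p : E → ℂ) (l : ℂ) (h f : E → ℂ) :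
    Prop :=
  ∀ᵐ v ∂ν, f v + Complex.I * p v * multiplier ν ℓ f / (l + Complex.I * (ℓ v : ℂ))
    = h v / (l + Complex.I * (ℓ v : ℂ))

/-- The solution `h / (λ + i ℓ) - (m / D(λ)) (-i p / (λ + i ℓ))` of the resolvent equation, where
`m = ∫ ℓ² h / (λ + i ℓ) dν`; its multiplier is `-m / D(λ)`. -/
def resolventSolution (ν : Measure E) (ℓ : StrongDual ℝ E) (p : E → ℂ) (l : ℂ) (h : E → ℂ) :
    E → ℂ :=
  fun v => h v / (l + Complex.I * (ℓ v : ℂ)) -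
    (∫ w, ((ℓ w ^ 2 : ℝ) : ℂ) * (h w / (l + Complex.I * (ℓ w : ℂ))) ∂ν) / dispersion ν ℓ p l *
      (-Complex.I * (p v / (l + Complex.I * (ℓ v : ℂ))))

lemma dispersion_eq_one_add_integral (ν : Measure E) (ℓ : StrongDual ℝ E) (p : E → ℂ) (l : ℂ) :
    dispersion ν ℓ p l = 1 + ∫ v, ((ℓ v ^ 2 : ℝ) : ℂ) *
      (-Complex.I * (p v / (l + Complex.I * (ℓ v : ℂ)))) ∂ν := by
  rw [dispersion, sub_eq_add_neg, ← neg_mul, ← integral_const_mul]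
  congr 2 with v
  ring

variable {ν : Measure E} {ℓ : StrongDual ℝ E} {p h f k : E → ℂ} {l : ℂ}

variable [OpensMeasurableSpace E]

lemma integrable_sq_mul_of_integrable_weight_mul (ℓ : StrongDual ℝ E)
    (hk : Integrable (fun v => ((1 + ‖v‖ ^ 2 : ℝ) : ℂ) * k v) ν) :
    Integrable (fun v => ((ℓ v ^ 2 : ℝ) : ℂ) * k v) ν := by
  refine integrable_mul_of_norm_le_mul_norm (C := ‖ℓ‖ ^ 2)
    (Measurable.aestronglyMeasurable (by fun_prop))
    (Measurable.aestronglyMeasurable (by fun_prop)) one_add_sq_norm_ofReal_ne_zero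
    (fun v => ?_) hk
  rw [Complex.norm_of_nonneg (by positivity), Complex.norm_of_nonneg (by positivity)]
  calc ℓ v ^ 2 = ‖ℓ v‖ ^ 2 := (sq_abs _).symm
    _ ≤ (‖ℓ‖ * ‖v‖) ^ 2 := by gcongr; exact ℓ.le_opNorm v
    _ ≤ ‖ℓ‖ ^ 2 * (1 + ‖v‖ ^ 2) := by nlinarith [sq_nonneg ‖ℓ‖]

lemma integrable_weight_mul_div (hl : l.re ≠ 0) (ℓ : StrongDual ℝ E)
    (hk : Integrable (fun v => ((1 + ‖v‖ ^ 2 : ℝ) : ℂ) * k v) ν) :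
    Integrable (fun v => ((1 + ‖v‖ ^ 2 : ℝ) : ℂ) * (k v / (l + Complex.I * (ℓ v : ℂ)))) ν := by
  simpa only [mul_div_assoc] using integrable_div_add_I_mul_ofReal hl ℓ.measurable.aemeasurable hk

lemma integrable_sq_mul_div (hl : l.re ≠ 0) (ℓ : StrongDual ℝ E)
    (hk : Integrable (fun v => ((1 + ‖v‖ ^ 2 : ℝ) : ℂ) * k v) ν) :
    Integrable (fun v => ((ℓ v ^ 2 : ℝ) : ℂ) * (k v / (l + Complex.I * (ℓ v : ℂ)))) ν :=
  integrable_sq_mul_of_integrable_weight_mul ℓ (integrable_weight_mul_div hl ℓ hk)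

lemma integrable_sq_mul_neg_I_mul_div (hl : l.re ≠ 0) (ℓ : StrongDual ℝ E)
    (hk : Integrable (fun v => ((1 + ‖v‖ ^ 2 : ℝ) : ℂ) * k v) ν) :
    Integrable (fun v => ((ℓ v ^ 2 : ℝ) : ℂ) *
      (-Complex.I * (k v / (l + Complex.I * (ℓ v : ℂ))))) ν := by
  simpa only [mul_left_comm (-Complex.I)] using
    (integrable_sq_mul_div hl ℓ hk).const_mul (-Complex.I)

lemma isResolventSolution_iff_ae_eq (hl : l.re ≠ 0)
    (hp : Integrable (fun v => ((1 + ‖v‖ ^ 2 : ℝ) : ℂ) * p v) ν)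
    (hD : dispersion ν ℓ p l ≠ 0)
    (hh : Integrable (fun v => ((1 + ‖v‖ ^ 2 : ℝ) : ℂ) * h v) ν) :
    IsResolventSolution ν ℓ p l h f ↔ f =ᵐ[ν] resolventSolution ν ℓ p l h := by
  unfold IsResolventSolution resolventSolution
  rw [dispersion_eq_one_add_integral] at hD ⊢
  have hterm (v : E) : Complex.I * p v * multiplier ν ℓ f / (l + Complex.I * (ℓ v : ℂ)) =
      (∫ w, ((ℓ w ^ 2 : ℝ) : ℂ) * f w ∂ν) *
        (-Complex.I * (p v / (l + Complex.I * (ℓ v : ℂ)))) := by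
    rw [multiplier]
    ring
  simp only [hterm]
  exact add_integral_mul_ae_eq_iff (integrable_sq_mul_neg_I_mul_div hl ℓ hp)
    (integrable_sq_mul_div hl ℓ hh) hD

lemma multiplier_eq_of_ae_eq_resolventSolution (hl : l.re ≠ 0)
    (hp : Integrable (fun v => ((1 + ‖v‖ ^ 2 : ℝ) : ℂ) * p v) ν)
    (hD : dispersion ν ℓ p l ≠ 0)
    (hh : Integrable (fun v => ((1 + ‖v‖ ^ 2 : ℝ) : ℂ) * h v) ν)
    (hf : f =ᵐ[ν] resolventSolution ν ℓ p l h) :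
    multiplier ν ℓ f = -(1 / dispersion ν ℓ p l) *
      ∫ v, ((ℓ v ^ 2 : ℝ) : ℂ) * h v / (l + Complex.I * (ℓ v : ℂ)) ∂ν := by
  unfold resolventSolution at hf
  rw [dispersion_eq_one_add_integral] at hD hf ⊢
  rw [multiplier, integral_mul_eq_div_of_ae_eq_sub (integrable_sq_mul_neg_I_mul_div hl ℓ hp)
    (integrable_sq_mul_div hl ℓ hh) hD hf]
  simp only [mul_div_assoc]
  ring

lemma integrable_weight_mul_resolventSolution (hl : l.re ≠ 0)
    (hp : Integrable (fun v => ((1 + ‖v‖ ^ 2 : ℝ) : ℂ) * p v) ν)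
    (hh : Integrable (fun v => ((1 + ‖v‖ ^ 2 : ℝ) : ℂ) * h v) ν) :
    Integrable (fun v => ((1 + ‖v‖ ^ 2 : ℝ) : ℂ) * resolventSolution ν ℓ p l h v) ν := by
  unfold resolventSolution
  simp only [mul_sub, mul_left_comm ((1 + ‖_‖ ^ 2 : ℝ) : ℂ)]
  exact (integrable_weight_mul_div hl ℓ hh).sub
    (((integrable_weight_mul_div hl ℓ hp).const_mul _).const_mul _)

theorem resolvent_equation_solvability_general (ν : Measure E) (ℓ : StrongDual ℝ E) {p : E → ℂ}
    (hp : Integrable (fun v => ((1 + ‖v‖ ^ 2 : ℝ) : ℂ) * p v) ν) {l : ℂ} (hl : l.re ≠ 0)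
    (hD : dispersion ν ℓ p l ≠ 0) {h : E → ℂ}
    (hh : Integrable (fun v => ((1 + ‖v‖ ^ 2 : ℝ) : ℂ) * h v) ν) :
    ∃ f : E → ℂ, Measurable f ∧ Integrable (fun v => ((1 + ‖v‖ ^ 2 : ℝ) : ℂ) * f v) ν ∧
      multiplier ν ℓ f = -(1 / dispersion ν ℓ p l) *
        ∫ v, ((ℓ v ^ 2 : ℝ) : ℂ) * h v / (l + Complex.I * (ℓ v : ℂ)) ∂ν ∧
      ∀ g : E → ℂ, IsResolventSolution ν ℓ p l h g ↔ g =ᵐ[ν] f := by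
  have hint := integrable_weight_mul_resolventSolution (ℓ := ℓ) hl hp hh
  have hsm := aestronglyMeasurable_of_integrable_weight_mul hint
  refine ⟨hsm.mk _, hsm.stronglyMeasurable_mk.measurable, ?_, ?_, fun g => ?_⟩
  · exact hint.congr (hsm.ae_eq_mk.mono fun v hv => congrArg _ hv)
  · exact multiplier_eq_of_ae_eq_resolventSolution hl hp hD hh hsm.ae_eq_mk.symm
  · rw [isResolventSolution_iff_ae_eq hl hp hD hh]
    exact hsm.ae_eq_mk.congr_right

end Resolvent

lemma integrable_weight_mul_pdE {μ : E3 → ℝ}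
    (hμint : Integrable (fun v : E3 => (1 + ‖v‖) ^ 3 * Real.sqrt (∑ i, (pdE i μ v) ^ 2)))
    (i : Fin 3) : Integrable (fun v : E3 => ((1 + ‖v‖ ^ 2 : ℝ) : ℂ) * (pdE i μ v : ℂ)) := by
  have hmeas : Measurable (pdE i μ) := measurable_fderiv_apply_const ℝ μ _
  have hweight (v : E3) : 1 + ‖v‖ ^ 2 ≤ (1 + ‖v‖) ^ 3 := by
    nlinarith [norm_nonneg v, pow_nonneg (norm_nonneg v) 3]
  have hgrad (v : E3) : |pdE i μ v| ≤ Real.sqrt (∑ j, (pdE j μ v) ^ 2) :=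
    Real.abs_le_sqrt (Finset.single_le_sum (f := fun j => pdE j μ v ^ 2)
      (fun j _ => sq_nonneg _) (Finset.mem_univ i))
  refine hμint.mono' (by fun_prop) (.of_forall fun v => ?_)
  rw [norm_mul, Complex.norm_of_nonneg (by positivity), Complex.norm_real]
  exact mul_le_mul (hweight v) (hgrad v) (norm_nonneg _) (by positivity)

/-- Solvability of the resolvent equation `(λ - 𝓛₁)f = h`: for `Re λ ≠ 0` with
`D(λ) := 1 - i∫ v₁² ∂_{v₁}μ/(λ + iv₁) dv ≠ 0` and `(1+|v|²)h` integrable, there is a unique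
(up to a.e. equality) measurable `f` with `(1+|v|²)f` integrable solving
`f + i∂_{v₁}μ·φ/(λ + iv₁) = h/(λ + iv₁)` a.e., where `φ := -∫ v₁² f dv`; moreover
`φ = -(1/D(λ))·∫ v₁² h/(λ + iv₁) dv`. -/
theorem resolvent_equation_solvability (μ : E3 → ℝ) (hμ : ContDiff ℝ 1 μ)
    (hμint : Integrable (fun v : E3 => (1 + ‖v‖) ^ 3 * Real.sqrt (∑ i, (pdE i μ v) ^ 2)))
    (l : ℂ) (hl : l.re ≠ 0)
    (hD : (1 : ℂ) - Complex.I *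
        ∫ v : E3, (((v 0) ^ 2 : ℝ) : ℂ) * (pdE 0 μ v : ℂ) / (l + Complex.I * (v 0 : ℂ)) ≠ 0)
    (h : E3 → ℂ) (hmeas : Measurable h)
    (hint : Integrable (fun v : E3 => ((1 + ‖v‖ ^ 2 : ℝ) : ℂ) * h v)) :
    ∃ f : E3 → ℂ,
      (Measurable f ∧ Integrable (fun v : E3 => ((1 + ‖v‖ ^ 2 : ℝ) : ℂ) * f v) ∧
        (∀ᵐ v : E3,
          f v + Complex.I * (pdE 0 μ v : ℂ) *
              (-(∫ w : E3, (((w 0) ^ 2 : ℝ) : ℂ) * f w)) / (l + Complex.I * (v 0 : ℂ))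
            = h v / (l + Complex.I * (v 0 : ℂ)))) ∧
      (-(∫ w : E3, (((w 0) ^ 2 : ℝ) : ℂ) * f w)
        = -((1 : ℂ) / ((1 : ℂ) - Complex.I *
              ∫ v : E3, (((v 0) ^ 2 : ℝ) : ℂ) * (pdE 0 μ v : ℂ)
                / (l + Complex.I * (v 0 : ℂ)))) *
            ∫ v : E3, (((v 0) ^ 2 : ℝ) : ℂ) * h v / (l + Complex.I * (v 0 : ℂ))) ∧
      (∀ g : E3 → ℂ, Measurable g →
        Integrable (fun v : E3 => ((1 + ‖v‖ ^ 2 : ℝ) : ℂ) * g v) →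
        (∀ᵐ v : E3,
          g v + Complex.I * (pdE 0 μ v : ℂ) *
              (-(∫ w : E3, (((w 0) ^ 2 : ℝ) : ℂ) * g w)) / (l + Complex.I * (v 0 : ℂ))
            = h v / (l + Complex.I * (v 0 : ℂ))) →
        g =ᵐ[volume] f) := by
  obtain ⟨f, hf, hfint, hφ, hiff⟩ := resolvent_equation_solvability_general volume
    (EuclideanSpace.proj (0 : Fin 3)) (integrable_weight_mul_pdE hμint 0) hl hD hint
  exact ⟨f, ⟨hf, hfint, (hiff f).2 .rfl⟩, hφ, fun g _ _ => (hiff g).1⟩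

end
end

section
/- Let λ ∈ ℂ with Re λ ≠ 0. Then λ is an eigenvalue of 𝓛₁, i.e. there exists a measurable f : ℝ³ → ℂ, not almost everywhere zero, with (1+|v|²)·f integrable and (λ + i v₁)·f(v) = −i ∂_{v₁}μ(v)·φ(f) for almost every v (where φ(f) := −∫_{ℝ³} v₁² f dv), if and only if D(λ) := 1 − i ∫_{ℝ³} v₁² ∂_{v₁}μ(v) / (λ + i v₁) dv = 0. -/
open MeasureTheory

noncomputable section

/-!
Dividing `(l + iξ) f = -i g φ(f)` by `l + iξ`, which is bounded below by `|Re l|`, turns the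
eigenvalue equation into the fixed-point equation `f = (∫ ξ² f) F` with `F = i g / (l + iξ)`. Its
solutions are multiples of `F`, and pairing with `ξ²` shows that a nonzero one exists if and only if
`∫ ξ² F = 1`, that is, `D(l) = 0`.
-/

section RankOne

variable {α 𝕜 : Type*} [MeasurableSpace α] {ν : Measure α} [RCLike 𝕜] {f F k w : α → 𝕜}

theorem integral_mul_eq_one_of_ae_eq_mul_integral (hf₀ : ¬ f =ᵐ[ν] 0)
    (hf : f =ᵐ[ν] fun x => F x * ∫ y, k y * f y ∂ν) : ∫ x, k x * F x ∂ν = 1 := by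
  set c := ∫ y, k y * f y ∂ν with hc
  have hc₀ : c ≠ 0 := fun h => hf₀ (hf.trans (.of_forall fun x => by simp [h]))
  have hself : (∫ x, k x * F x ∂ν) * c = c :=
    calc (∫ x, k x * F x ∂ν) * c = ∫ x, k x * F x * c ∂ν := (integral_mul_const c _).symm
      _ = ∫ x, k x * f x ∂ν := integral_congr_ae (hf.mono fun x hx => by simp only [hx, mul_assoc])
      _ = c := hc.symm
  exact (mul_eq_right₀ hc₀).mp hself

theorem not_ae_eq_zero_of_integral_mul_ne_zero (h : ∫ x, k x * F x ∂ν ≠ 0) : ¬ F =ᵐ[ν] 0 :=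
  fun hF => h (integral_eq_zero_of_ae (hF.mono fun x hx => by simp [hx]))

-- If `k * F` is not integrable, the junk value `0` of the integrals makes both sides false.
theorem exists_ae_eq_mul_integral_iff (hw : AEMeasurable w ν) (hw₀ : ∀ᵐ x ∂ν, w x ≠ 0)
    (hwF : Integrable (fun x => w x * F x) ν) :
    (∃ f : α → 𝕜, Measurable f ∧ Integrable (fun x => w x * f x) ν ∧ ¬ f =ᵐ[ν] 0 ∧
        f =ᵐ[ν] fun x => F x * ∫ y, k y * f y ∂ν)
      ↔ ∫ x, k x * F x ∂ν = 1 := by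
  refine ⟨fun ⟨f, _, _, hf₀, hf⟩ => integral_mul_eq_one_of_ae_eq_mul_integral hf₀ hf, fun h => ?_⟩
  have hF : AEMeasurable F ν :=
    (hwF.aemeasurable.div hw).congr (hw₀.mono fun x hx => mul_div_cancel_left₀ (F x) hx)
  have hmk : hF.mk F =ᵐ[ν] F := hF.ae_eq_mk.symm
  have hint : ∫ x, k x * hF.mk F x ∂ν = 1 :=
    (integral_congr_ae (hmk.mono fun x hx => by simp only [hx])).trans h
  refine ⟨hF.mk F, hF.measurable_mk, hwF.congr (hmk.mono fun x hx => by simp only [hx]),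
    not_ae_eq_zero_of_integral_mul_ne_zero (hint.trans_ne one_ne_zero), ?_⟩
  simpa only [hint, mul_one] using hmk

end RankOne

section Resolvent

variable {l : ℂ}

theorem abs_re_le_norm_add_I_mul (l : ℂ) (x : ℝ) : |l.re| ≤ ‖l + Complex.I * (x : ℂ)‖ := by
  simpa using Complex.abs_re_le_norm (l + Complex.I * (x : ℂ))

theorem add_I_mul_ne_zero (hl : l.re ≠ 0) (x : ℝ) : l + Complex.I * (x : ℂ) ≠ 0 :=
  norm_pos_iff.mp ((abs_pos.mpr hl).trans_le (abs_re_le_norm_add_I_mul l x))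

theorem integrable_div_add_I_mul {α : Type*} [MeasurableSpace α] {ν : Measure α} {h : α → ℂ}
    {a : α → ℝ} (hh : Integrable h ν) (ha : AEMeasurable a ν) (hl : l.re ≠ 0) :
    Integrable (fun x => h x / (l + Complex.I * (a x : ℂ))) ν := by
  have hmeas : AEMeasurable (fun x => (l + Complex.I * (a x : ℂ))⁻¹) ν := by fun_prop
  refine hh.mul_bdd (c := |l.re|⁻¹) hmeas.aestronglyMeasurable (.of_forall fun x => ?_)
  rw [norm_inv]
  exact inv_anti₀ (abs_pos.mpr hl) (abs_re_le_norm_add_I_mul l (a x))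

end Resolvent

section Dispersion

variable {E : Type*} [SeminormedAddCommGroup E] [NormedSpace ℝ E] {ξ : StrongDual ℝ E}
  {g : E → ℂ} {l : ℂ}

/-- The eigenfunction candidate `i g / (l + iξ)` at the spectral parameter `l`, for the mode with
wave covector `ξ` and `g` in the role of `∂_ξ μ`; it is scaled so that `∫ ξ² f = 1` whenever it is
an eigenfunction. -/
def eigenProfile (ξ : StrongDual ℝ E) (g : E → ℂ) (l : ℂ) (v : E) : ℂ :=
  Complex.I * g v / (l + Complex.I * (ξ v : ℂ))

theorem add_I_mul_mul_eq_iff_eq_eigenProfile_mul (hl : l.re ≠ 0) (v : E) (z c : ℂ) :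
    (l + Complex.I * (ξ v : ℂ)) * z = -Complex.I * g v * (-c) ↔ z = eigenProfile ξ g l v * c := by
  rw [eigenProfile, div_mul_eq_mul_div, eq_div_iff (add_I_mul_ne_zero hl (ξ v)), mul_comm z,
    neg_mul, neg_mul_neg]

variable [MeasurableSpace E]

theorem integral_sq_mul_eigenProfile (ν : Measure E) (ξ : StrongDual ℝ E) (g : E → ℂ) (l : ℂ) :
    ∫ v, ((ξ v ^ 2 : ℝ) : ℂ) * eigenProfile ξ g l v ∂ν
      = Complex.I * ∫ v, ((ξ v ^ 2 : ℝ) : ℂ) * g v / (l + Complex.I * (ξ v : ℂ)) ∂ν := by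
  rw [← integral_const_mul]
  congr 1 with v
  rw [eigenProfile]
  ring

variable [OpensMeasurableSpace E] {ν : Measure E}

theorem integrable_mul_eigenProfile {w : E → ℂ} (hg : Integrable (fun v => w v * g v) ν)
    (hl : l.re ≠ 0) : Integrable (fun v => w v * eigenProfile ξ g l v) ν := by
  refine (integrable_div_add_I_mul (hg.const_mul Complex.I)
    ξ.continuous.measurable.aemeasurable hl).congr (.of_forall fun v => ?_)
  simp only [eigenProfile]
  ring

theorem eigenvalue_iff_dispersion_vanishes_general (ξ : StrongDual ℝ E)
    (hg : Integrable (fun v => ((1 + ‖v‖ ^ 2 : ℝ) : ℂ) * g v) ν) (hl : l.re ≠ 0) :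
    (∃ f : E → ℂ, Measurable f ∧
        Integrable (fun v => ((1 + ‖v‖ ^ 2 : ℝ) : ℂ) * f v) ν ∧
        ¬ (f =ᵐ[ν] 0) ∧
        (∀ᵐ v ∂ν,
          (l + Complex.I * (ξ v : ℂ)) * f v
            = -Complex.I * g v * (-(∫ u, ((ξ u ^ 2 : ℝ) : ℂ) * f u ∂ν))))
      ↔ (1 : ℂ) - Complex.I *
          ∫ v, ((ξ v ^ 2 : ℝ) : ℂ) * g v / (l + Complex.I * (ξ v : ℂ)) ∂ν = 0 := by
  have hw : Measurable fun v : E => ((1 + ‖v‖ ^ 2 : ℝ) : ℂ) := by fun_prop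
  have hw₀ (v : E) : ((1 + ‖v‖ ^ 2 : ℝ) : ℂ) ≠ 0 :=
    Complex.ofReal_ne_zero.mpr (by positivity)
  simp only [add_I_mul_mul_eq_iff_eq_eigenProfile_mul hl]
  rw [← integral_sq_mul_eigenProfile, sub_eq_zero, eq_comm (a := (1 : ℂ))]
  exact exists_ae_eq_mul_integral_iff hw.aemeasurable (.of_forall hw₀)
    (integrable_mul_eigenProfile hg hl)

end Dispersion

section PartialDerivative

theorem measurable_pdE (i : Fin 3) (g : E3 → ℝ) : Measurable (pdE i g) :=
  measurable_fderiv_apply_const ℝ g _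

theorem abs_pdE_le_sqrt_sum_sq (i : Fin 3) (g : E3 → ℝ) (v : E3) :
    |pdE i g v| ≤ Real.sqrt (∑ j, (pdE j g v) ^ 2) :=
  Real.abs_le_sqrt <|
    Finset.single_le_sum (f := fun j => (pdE j g v) ^ 2) (fun _ _ => sq_nonneg _)
      (Finset.mem_univ i)

theorem one_add_sq_le_one_add_pow_three {r : ℝ} (hr : 0 ≤ r) : 1 + r ^ 2 ≤ (1 + r) ^ 3 :=
  calc 1 + r ^ 2 ≤ (1 + r) ^ 2 := by nlinarith
    _ ≤ (1 + r) ^ 3 := pow_le_pow_right₀ (by linarith) (by norm_num)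

theorem integrable_one_add_norm_sq_mul_pdE {ν : Measure E3} {g : E3 → ℝ}
    (hg : Integrable (fun v : E3 => (1 + ‖v‖) ^ 3 * Real.sqrt (∑ i, (pdE i g v) ^ 2)) ν)
    (i : Fin 3) :
    Integrable (fun v : E3 => ((1 + ‖v‖ ^ 2 : ℝ) : ℂ) * (pdE i g v : ℂ)) ν := by
  have hmeas := measurable_pdE i g
  refine hg.mono' (by fun_prop) (.of_forall fun v => ?_)
  rw [← Complex.ofReal_mul, Complex.norm_real, Real.norm_eq_abs, abs_mul,
    abs_of_pos (show 0 < 1 + ‖v‖ ^ 2 by positivity)]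
  exact mul_le_mul (one_add_sq_le_one_add_pow_three (norm_nonneg v))
    (abs_pdE_le_sqrt_sum_sq i g v) (abs_nonneg _) (by positivity)

end PartialDerivative

/-- Eigenvalue characterization for the Fourier-mode operator
`𝓛₁ f := -iv₁ f + ∂_{v₁}μ·φ(f)`, `φ(f) := -∫ v₁² f dv`: for `Re λ ≠ 0`, `λ` is an eigenvalue
of `𝓛₁` if and only if `D(λ) := 1 - i∫ v₁² ∂_{v₁}μ/(λ + iv₁) dv = 0`. -/
theorem eigenvalue_iff_dispersion_vanishes (μ : E3 → ℝ) (hμ : ContDiff ℝ 1 μ)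
    (hμint : Integrable (fun v : E3 => (1 + ‖v‖) ^ 3 * Real.sqrt (∑ i, (pdE i μ v) ^ 2)))
    (l : ℂ) (hl : l.re ≠ 0) :
    (∃ f : E3 → ℂ, Measurable f ∧
        Integrable (fun v : E3 => ((1 + ‖v‖ ^ 2 : ℝ) : ℂ) * f v) ∧
        ¬ (f =ᵐ[volume] 0) ∧
        (∀ᵐ v : E3,
          (l + Complex.I * (v 0 : ℂ)) * f v
            = -Complex.I * (pdE 0 μ v : ℂ) *
                (-(∫ w : E3, (((w 0) ^ 2 : ℝ) : ℂ) * f w))))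
      ↔ (1 : ℂ) - Complex.I *
          ∫ v : E3, (((v 0) ^ 2 : ℝ) : ℂ) * (pdE 0 μ v : ℂ)
            / (l + Complex.I * (v 0 : ℂ)) = 0 := by
  simpa only [PiLp.proj_apply] using eigenvalue_iff_dispersion_vanishes_general
    (EuclideanSpace.proj 0) (integrable_one_add_norm_sq_mul_pdE hμint 0) hl

end
end
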